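/- (Identification of the tangentially homogenized density) For every s ∈ M and every ξ ∈ [T_s M]^N, Tf_hom(s,ξ) = g_hom(s,ξ), where g_hom(s,ξ) := lim_{t→∞} inf{ (1/t^N)∫_{(0,t)^N} g(y,s,ξ+∇φ(y)) dy : φ ∈ W^{1,∞}_0((0,t)^N;ℝ^d) } is the usual (unconstrained) homogenized energy density of g(·,s,·). -/

import Mathlib

open MeasureTheory Filter Set
open scoped ENNReal RealInnerProductSpace Topology NNReal

noncomputable section

/-- Euclidean space `ℝ^N`. -/
abbrev EN (N : ℕ) : Type := EuclideanSpace ℝ (Fin N)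

/-- `d × N` matrices, viewed as continuous linear maps `ℝ^N → ℝ^d`. -/
abbrev Mat (d N : ℕ) : Type := EN N →L[ℝ] EN d

variable {N d : ℕ}

/-- The tangent set of `M ⊆ ℝ^d` at `s`: velocities of curves in `M` through `s`. -/
def TangentSet (M : Set (EN d)) (s : EN d) : Set (EN d) :=
  {v | ∃ γ : ℝ → EN d, (∀ t, γ t ∈ M) ∧ γ 0 = s ∧ HasDerivAt γ v 0}

/-- A matrix `ξ ∈ ℝ^{d×N}` has all its columns in the tangent space `T_s M`,
i.e. `ξ ∈ [T_s M]^N`. -/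
def TangentCols (M : Set (EN d)) (s : EN d) (ξ : Mat d N) : Prop :=
  ∀ i : Fin N, ξ (EuclideanSpace.single i 1) ∈ TangentSet M s

/-- `T` is a smooth `m`-dimensional submanifold (without boundary) of `ℝ^n`,
described locally as a regular level set. -/
def IsSubmanifoldDim (n m : ℕ) (T : Set (EN n)) : Prop :=
  ∀ x ∈ T, ∃ (U : Set (EN n)) (F : EN n → EN (n - m)),
    IsOpen U ∧ x ∈ U ∧ ContDiffOn ℝ (⊤ : ℕ∞) F U ∧
    (T ∩ U = {y ∈ U | F y = 0}) ∧ ∀ y ∈ U, Function.Surjective (fderiv ℝ F y)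

/-- `M` is a nonempty compact connected smooth submanifold of `ℝ^d` without boundary. -/
def IsNiceManifold (d : ℕ) (M : Set (EN d)) : Prop :=
  M.Nonempty ∧ IsCompact M ∧ IsConnected M ∧ ∃ m : ℕ, m ≤ d ∧ IsSubmanifoldDim d m M

/-- A finite union of subsets of `(N-2)`-dimensional submanifolds of `ℝ^N`. -/
def IsSigmaSet (N : ℕ) (Sg : Set (EN N)) : Prop :=
  ∃ (k : ℕ) (S : Fin k → Set (EN N)), Sg = ⋃ i, S i ∧
    ∀ i, ∃ T : Set (EN N), IsSubmanifoldDim N (N - 2) T ∧ S i ⊆ T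

/-- `u ∈ W^{1,1}(A;ℝ^d)` with weak gradient `Du`. -/
def MemW11 (A : Set (EN N)) (u : EN N → EN d) (Du : EN N → Mat d N) : Prop :=
  IntegrableOn u A volume ∧ IntegrableOn Du A volume ∧
    ∀ φ : EN N → ℝ, ContDiff ℝ (⊤ : ℕ∞) φ → HasCompactSupport φ → tsupport φ ⊆ A →
      ∀ y : EN N, ∫ x in A, fderiv ℝ φ x y • u x = - ∫ x in A, φ x • Du x y

/-- `u` takes values in `M` almost everywhere on `A`. -/
def AeIn (A : Set (EN N)) (u : EN N → EN d) (M : Set (EN d)) : Prop :=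
  ∀ᵐ x ∂(volume.restrict A), u x ∈ M

/-- Recession function of `h : ℝ^{d×N} → ℝ`: `h^∞(ξ) = limsup_{t→∞} h(tξ)/t`. -/
def recc (h : Mat d N → ℝ) (ξ : Mat d N) : ℝ :=
  Filter.limsup (fun t : ℝ => h (t • ξ) / t) Filter.atTop

/-- The open cube `(0,t)^N`. -/
def posCube (N : ℕ) (t : ℝ) : Set (EN N) := {x | ∀ i, x i ∈ Set.Ioo (0 : ℝ) t}

/-- The open unit cube `(-1/2,1/2)^N`. -/
def unitCube (N : ℕ) : Set (EN N) := {x | ∀ i, x i ∈ Set.Ioo (-(1/2) : ℝ) (1/2)}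

/-- The cell infimum over `W^{1,∞}_0((0,t)^N; T_s M)` defining `Tf_hom`. -/
def tanCell (f : EN N → Mat d N → ℝ) (M : Set (EN d)) (s : EN d) (ξ : Mat d N)
    (t : ℝ) : ℝ :=
  sInf {c : ℝ | ∃ (φ : EN N → EN d) (K : ℝ≥0), LipschitzWith K φ ∧
    (∀ x, φ x ∈ TangentSet M s) ∧ (∀ x, x ∉ posCube N t → φ x = 0) ∧
    c = (t ^ N)⁻¹ * ∫ x in posCube N t, f x (ξ + fderiv ℝ φ x)}

/-- The tangentially homogenized density `Tf_hom` (the limit as `t → ∞`,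
realized as a limsup). -/
def Tfhom (f : EN N → Mat d N → ℝ) (M : Set (EN d)) (s : EN d) (ξ : Mat d N) : ℝ :=
  Filter.limsup (fun t => tanCell f M s ξ t) Filter.atTop

/-- The unconstrained cell infimum over `W^{1,∞}_0((0,t)^N; ℝ^d)`. -/
def freeCell (h : EN N → Mat d N → ℝ) (ξ : Mat d N) (t : ℝ) : ℝ :=
  sInf {c : ℝ | ∃ (φ : EN N → EN d) (K : ℝ≥0), LipschitzWith K φ ∧
    (∀ x, x ∉ posCube N t → φ x = 0) ∧
    c = (t ^ N)⁻¹ * ∫ x in posCube N t, h x (ξ + fderiv ℝ φ x)}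

/-- The usual homogenized density of a parametrized integrand `g(y,s,ξ)`. -/
def ghomOf (g : EN N → EN d → Mat d N → ℝ) (s : EN d) (ξ : Mat d N) : ℝ :=
  Filter.limsup (fun t => freeCell (fun y => g y s) ξ t) Filter.atTop

/-- The open cube of side `t` centered at the origin adapted to the
orthonormal basis `B`. -/
def obCube (B : OrthonormalBasis (Fin N) ℝ (EN N)) (t : ℝ) : Set (EN N) :=
  {x | ∀ i, ⟪x, B i⟫ ∈ Set.Ioo (-(t / 2)) (t / 2)}

/-- Surface cell infimum at scale `t`: infimum of `t^{1-N} ∫_{tQ_ν} h(y,∇φ)` over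
`φ ∈ W^{1,1}(tQ_ν;M)` with `φ = a` on `∂(tQ_ν) ∩ {x·ν₁ > 0}` and `φ = b`
on `∂(tQ_ν) ∩ {x·ν₁ ≤ 0}`. -/
def surfCell (h : EN N → Mat d N → ℝ) (M : Set (EN d)) (a b : EN d) (ν₁ : EN N)
    (B : OrthonormalBasis (Fin N) ℝ (EN N)) (t : ℝ) : ℝ :=
  sInf {c : ℝ | ∃ (φ : EN N → EN d) (Dφ : EN N → Mat d N),
    MemW11 (obCube B t) φ Dφ ∧ AeIn (obCube B t) φ M ∧
    (∀ x ∈ frontier (obCube B t),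
      (0 < ⟪x, ν₁⟫ → φ x = a) ∧ (⟪x, ν₁⟫ ≤ 0 → φ x = b)) ∧
    c = (t ^ (N - 1))⁻¹ * ∫ x in obCube B t, h x (Dφ x)}

/-- Surface cell infimum where moreover the adapted cube is chosen with two of
its faces orthogonal to `ν₁`. -/
def thetaCell (h : EN N → Mat d N → ℝ) (M : Set (EN d)) (a b : EN d) (ν₁ : EN N)
    (t : ℝ) : ℝ :=
  sInf {c : ℝ | ∃ B : OrthonormalBasis (Fin N) ℝ (EN N), (∃ i, B i = ν₁) ∧
    c = surfCell h M a b ν₁ B t}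

/-- The homogenized surface energy density `θ_hom` (built from `f^∞`). -/
def thetaHom (f : EN N → Mat d N → ℝ) (M : Set (EN d)) (a b : EN d) (ν₁ : EN N) : ℝ :=
  Filter.limsup (fun t => thetaCell (fun y => recc (f y)) M a b ν₁ t) Filter.atTop

/-- Strong `L¹(A;ℝ^d)`-convergence of a family `v ε → u` as `ε → 0⁺`. -/
def TendstoL1 (A : Set (EN N)) (v : ℝ → EN N → EN d) (u : EN N → EN d) : Prop :=
  Filter.Tendsto (fun ε => ∫ x in A, ‖v ε x - u x‖) (nhdsWithin 0 (Set.Ioi 0)) (nhds 0)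

/-- Γ-convergence as `ε → 0⁺` of the family `Fε` at the point `u`
(for the strong `L¹(A)`-topology) to the value `c`. -/
def GammaConvergesAt (Fε : ℝ → (EN N → EN d) → ℝ≥0∞) (A : Set (EN N))
    (u : EN N → EN d) (c : ℝ≥0∞) : Prop :=
  (∀ v : ℝ → EN N → EN d, TendstoL1 A v u →
      c ≤ Filter.liminf (fun ε => Fε ε (v ε)) (nhdsWithin 0 (Set.Ioi 0))) ∧
  (∃ v : ℝ → EN N → EN d, TendstoL1 A v u ∧
      Filter.limsup (fun ε => Fε ε (v ε)) (nhdsWithin 0 (Set.Ioi 0)) ≤ c)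

/-- The localized functional `F_ε(u,A) = ∫_A f(x/ε,∇u) dx` if
`u ∈ W^{1,1}(A;M)`, and `+∞` otherwise. -/
def FepsSet (f : EN N → Mat d N → ℝ) (M : Set (EN d)) (ε : ℝ) (u : EN N → EN d)
    (A : Set (EN N)) : ℝ≥0∞ :=
  ⨅ (Du : EN N → Mat d N) (_ : MemW11 A u Du ∧ AeIn A u M),
    ENNReal.ofReal (∫ x in A, f (ε⁻¹ • x) (Du x))

/-- The localized Γ-lower limit
`F(u,A) = inf { liminf_n F_{ε_n}(u_n,A) : u_n → u in L¹(A) }`. -/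
def GammaLow (f : EN N → Mat d N → ℝ) (M : Set (EN d)) (εseq : ℕ → ℝ)
    (u : EN N → EN d) (A : Set (EN N)) : ℝ≥0∞ :=
  ⨅ (v : ℕ → EN N → EN d)
    (_ : Filter.Tendsto (fun n => ∫ x in A, ‖v n x - u x‖) Filter.atTop (nhds 0)),
    Filter.liminf (fun n => FepsSet f M (εseq n) (v n) A) Filter.atTop

/-- Extension of `F(u,·)` to arbitrary sets `B ⊆ Ω` by outer regularity. -/
def GammaLowB (f : EN N → Mat d N → ℝ) (M : Set (EN d)) (εseq : ℕ → ℝ)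
    (u : EN N → EN d) (Ω B : Set (EN N)) : ℝ≥0∞ :=
  ⨅ (A : Set (EN N)) (_ : IsOpen A ∧ A ⊆ Ω ∧ B ⊆ A), GammaLow f M εseq u A

/-- A package certifying `u ∈ BV(Ω;ℝ^d)`, with all its measure-theoretic
attributes: absolutely continuous gradient `grad = ∇u`, approximate
discontinuity (jump) set `S`, traces `up = u⁺`, `um = u⁻`, normal `nu = ν_u`,
approximate limit `ap = ũ`, Cantor part `cm = |D^c u|` with polar density
`cd = dD^cu/d|D^cu|`. -/
structure BVPack (Ω : Set (EN N)) (u : EN N → EN d) where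
  grad : EN N → Mat d N
  S : Set (EN N)
  up : EN N → EN d
  um : EN N → EN d
  nu : EN N → EN N
  ap : EN N → EN d
  cm : Measure (EN N)
  cd : EN N → Mat d N
  integrable : IntegrableOn u Ω volume
  grad_int : IntegrableOn grad Ω volume
  S_meas : MeasurableSet S
  cm_fin : cm Set.univ ≠ ⊤
  cm_in : cm Ωᶜ = 0
  jump_int : IntegrableOn (fun x => ‖up x - um x‖) (Ω ∩ S) (μH[(N : ℝ) - 1])
  nu_unit : ∀ x ∈ S, ‖nu x‖ = 1
  jump_ne : ∀ x ∈ S, up x ≠ um x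
  cd_unit : ∀ᵐ x ∂cm, ‖cd x‖ = 1
  cm_sing : cm ⟂ₘ (volume : Measure (EN N))
  cm_nojump : cm S = 0
  ap_lim : ∀ x ∈ Ω \ S,
    Filter.Tendsto
      (fun r : ℝ => (volume (Metric.ball x r)).toReal⁻¹ *
        ∫ y in Metric.ball x r, ‖u y - ap x‖)
      (nhdsWithin 0 (Set.Ioi 0)) (nhds 0)
  jump_lim_up : ∀ x ∈ Ω ∩ S,
    Filter.Tendsto
      (fun r : ℝ => (volume (Metric.ball x r)).toReal⁻¹ *
        ∫ y in {y ∈ Metric.ball x r | 0 < ⟪y - x, nu x⟫}, ‖u y - up x‖)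
      (nhdsWithin 0 (Set.Ioi 0)) (nhds 0)
  jump_lim_um : ∀ x ∈ Ω ∩ S,
    Filter.Tendsto
      (fun r : ℝ => (volume (Metric.ball x r)).toReal⁻¹ *
        ∫ y in {y ∈ Metric.ball x r | ⟪y - x, nu x⟫ < 0}, ‖u y - um x‖)
      (nhdsWithin 0 (Set.Ioi 0)) (nhds 0)
  decomp : ∀ φ : EN N → ℝ, ContDiff ℝ (⊤ : ℕ∞) φ → HasCompactSupport φ → tsupport φ ⊆ Ω →
    ∀ y : EN N,
      ∫ x in Ω, fderiv ℝ φ x y • u x =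
        -(∫ x in Ω, φ x • grad x y) - (∫ x, φ x • cd x y ∂cm) -
          ∫ x in Ω ∩ S, (⟪nu x, y⟫ * φ x) • (up x - um x) ∂(μH[(N : ℝ) - 1])

/-- The total variation measure `|Du|` associated to a BV package. -/
def totalVar (Ω : Set (EN N)) (u : EN N → EN d) (P : BVPack Ω u) : Measure (EN N) :=
  ((volume.restrict Ω).withDensity fun x => ENNReal.ofReal ‖P.grad x‖) + P.cm +
    ((μH[(N : ℝ) - 1]).restrict (Ω ∩ P.S)).withDensity
      fun x => ENNReal.ofReal ‖P.up x - P.um x‖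

/-- The standing assumptions (Carathéodory, (H1), (H2), (H3)) on the
integrand `f`. -/
structure StdIntegrand (N d : ℕ) (f : EN N → Mat d N → ℝ) (α β L : ℝ) : Prop where
  meas : ∀ ξ : Mat d N, Measurable fun y => f y ξ
  nonneg : ∀ y ξ, 0 ≤ f y ξ
  periodic : ∀ (y : EN N) (ξ : Mat d N) (i : Fin N),
    f (y + EuclideanSpace.single i 1) ξ = f y ξ
  alpha_pos : 0 < α
  alpha_le_beta : α ≤ β
  growth : ∀ᵐ y ∂(volume : Measure (EN N)), ∀ ξ,
    α * ‖ξ‖ ≤ f y ξ ∧ f y ξ ≤ β * (1 + ‖ξ‖)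
  lip_pos : 0 < L
  lip : ∀ᵐ y ∂(volume : Measure (EN N)), ∀ ξ ξ', |f y ξ - f y ξ'| ≤ L * ‖ξ - ξ'‖

/-- Hypothesis (H4): `|f(y,ξ) - f^∞(y,ξ)| ≤ C(1+|ξ|^{1-q})`. -/
def H4 (f : EN N → Mat d N → ℝ) (C q : ℝ) : Prop :=
  0 < C ∧ 0 < q ∧ q < 1 ∧
    ∀ᵐ y ∂(volume : Measure (EN N)), ∀ ξ,
      |f y ξ - recc (f y) ξ| ≤ C * (1 + ‖ξ‖ ^ (1 - q))

/-- The projection data used to build the modified integrand `g`: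
`pr` is the nearest-point projection onto `M` on a `δ₀`-neighborhood,
`tanProj s` is the orthogonal projection of `ℝ^d` onto `T_s M` (for `s ∈ M`),
and `chi` is the smooth cut-off. -/
structure ProjData {d : ℕ} (M : Set (EN d)) where
  δ₀ : ℝ
  pr : EN d → EN d
  chi : EN d → ℝ
  tanProj : EN d → EN d →L[ℝ] EN d
  δ₀_pos : 0 < δ₀
  pr_mem : ∀ s, Metric.infDist s M < δ₀ → pr s ∈ M
  pr_nearest : ∀ s, Metric.infDist s M < δ₀ → ‖s - pr s‖ = Metric.infDist s M
  pr_lip : ∃ K : ℝ≥0, LipschitzOnWith K pr {s | Metric.infDist s M < δ₀}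
  tanProj_lip : ∃ K : ℝ≥0,
    LipschitzOnWith K (fun s => tanProj (pr s)) {s | Metric.infDist s M < δ₀}
  chi_smooth : ContDiff ℝ (⊤ : ℕ∞) chi
  chi_supp : HasCompactSupport chi
  chi_range : ∀ s, chi s ∈ Set.Icc (0 : ℝ) 1
  chi_one : ∀ s, Metric.infDist s M ≤ δ₀ / 2 → chi s = 1
  chi_zero : ∀ s, 3 * δ₀ / 4 ≤ Metric.infDist s M → chi s = 0
  tanProj_mem : ∀ s ∈ M, ∀ v, tanProj s v ∈ TangentSet M s
  tanProj_id : ∀ s ∈ M, ∀ v ∈ TangentSet M s, tanProj s v = v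
  tanProj_symm : ∀ s ∈ M, ∀ v w, ⟪tanProj s v, w⟫ = ⟪v, tanProj s w⟫

/-- The cut-off tangential projection `ℙ_s(ξ) = χ(s) P_{Π(s)} ∘ ξ`. -/
def tanP {M : Set (EN d)} (D : ProjData M) (s : EN d) (ξ : Mat d N) : Mat d N :=
  D.chi s • ((D.tanProj (D.pr s)).comp ξ)

/-- The modified integrand `g(y,s,ξ) = f(y,ℙ_s(ξ)) + |ξ - ℙ_s(ξ)|`. -/
def gOf {M : Set (EN d)} (D : ProjData M) (f : EN N → Mat d N → ℝ) :
    EN N → EN d → Mat d N → ℝ :=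
  fun y s ξ => f y (tanP D s ξ) + ‖ξ - tanP D s ξ‖

/-- The geodesic distance on `M`. -/
def geoDist (M : Set (EN d)) (a b : EN d) : ℝ :=
  sInf {l : ℝ | ∃ γ : ℝ → EN d, ContDiff ℝ (⊤ : ℕ∞) γ ∧ (∀ t, γ t ∈ M) ∧
    γ 0 = b ∧ γ 1 = a ∧ l = ∫ t in Set.Icc (0 : ℝ) 1, ‖deriv γ t‖}

/-- The class `G(a,b)` of geodesic curves between `a` and `b`. -/
def GeodClass (M : Set (EN d)) (a b : EN d) : Set (ℝ → EN d) :=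
  {γ | ContDiff ℝ (⊤ : ℕ∞) γ ∧ (∀ t, γ t ∈ M) ∧ (∀ t : ℝ, 1 / 2 ≤ t → γ t = a) ∧
    (∀ t : ℝ, t ≤ -(1 / 2 : ℝ) → γ t = b) ∧
    (∫ t : ℝ, ‖deriv γ t‖) = geoDist M a b}

/-- `I_ε(a,b,ν)`: infimum of `∫_{Q_ν} h(x/ε,∇u)` over the geodesic-boundary
class `B_ε(a,b,ν)`. -/
def Ieps (h : EN N → Mat d N → ℝ) (M : Set (EN d)) (a b : EN d) (ν₁ : EN N)
    (B : OrthonormalBasis (Fin N) ℝ (EN N)) (ε : ℝ) : ℝ :=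
  sInf {c : ℝ | ∃ (φ : EN N → EN d) (Dφ : EN N → Mat d N) (γ : ℝ → EN d),
    γ ∈ GeodClass M a b ∧ MemW11 (obCube B 1) φ Dφ ∧ AeIn (obCube B 1) φ M ∧
    (∀ x ∈ frontier (obCube B 1), φ x = γ (⟪x, ν₁⟫ / ε)) ∧
    c = ∫ x in obCube B 1, h (ε⁻¹ • x) (Dφ x)}

/-- `J_ε(a,b,ν)`: infimum of `∫_{Q_ν} h(x/ε,∇u)` with sharp-interface boundary
datum `u_{a,b,ν}`. -/
def Jeps (h : EN N → Mat d N → ℝ) (M : Set (EN d)) (a b : EN d) (ν₁ : EN N)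
    (B : OrthonormalBasis (Fin N) ℝ (EN N)) (ε : ℝ) : ℝ :=
  sInf {c : ℝ | ∃ (φ : EN N → EN d) (Dφ : EN N → Mat d N),
    MemW11 (obCube B 1) φ Dφ ∧ AeIn (obCube B 1) φ M ∧
    (∀ x ∈ frontier (obCube B 1),
      (0 < ⟪x, ν₁⟫ → φ x = a) ∧ (⟪x, ν₁⟫ ≤ 0 → φ x = b)) ∧
    c = ∫ x in obCube B 1, h (ε⁻¹ • x) (Dφ x)}

/-- The defining properties of the interfacial density `K` from the integral
representation on partitions. -/
def IsJumpRepr (Ω : Set (EN N)) (f : EN N → Mat d N → ℝ) (M : Set (EN d))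
    (εseq : ℕ → ℝ) (K : EN d → EN d → EN N → ℝ) : Prop :=
  (∀ a ∈ M, ∀ b ∈ M, ∀ ν₁ : EN N, ‖ν₁‖ = 1 → 0 ≤ K a b ν₁) ∧
  (∀ a ∈ M, ∀ b ∈ M, ContinuousOn (K a b) (Metric.sphere (0 : EN N) 1)) ∧
  (∀ a ∈ M, ∀ b ∈ M, ∀ ν₁ : EN N, ‖ν₁‖ = 1 → K a b ν₁ = K b a (-ν₁)) ∧
  (∀ T : Finset (EN d), (T : Set (EN d)) ⊆ M →
    ∀ (u : EN N → EN d) (P : BVPack Ω u),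
      (∀ᵐ x ∂(volume.restrict Ω), u x ∈ (T : Set (EN d))) →
      ∀ S : Set (EN N), MeasurableSet S → S ⊆ Ω ∩ P.S →
        GammaLowB f M εseq u Ω S =
          ENNReal.ofReal
            (∫ x in S, K (P.up x) (P.um x) (P.nu x) ∂(μH[(N : ℝ) - 1])))

end

/-!
For `s ∈ M` the modified integrand is `g(y,s,η) = f(y,Pη) + |η - Pη|`, where `P` is the projection
onto `T_s M`. Replacing a competitor `φ` of the unconstrained problem by `P ∘ φ` does not increase
its energy when `Pξ = ξ`, and on tangential competitors the energies of `f` and `g` agree, so the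
two cell infima coincide for every `t ≥ 0`.

The common limit exists because, by periodicity, a competitor on `(0,t)^N` can be repeated on a grid
of mesh `⌈t⌉` inside `(0,S)^N` and extended by zero. The cell infimum `a` thus satisfies
`a(S) ≤ r a(t) + C (1 - r)`, where `r` is the filled fraction of the large cube, which is close to
`1` for `1 ≪ t ≪ S`; hence `limsup a ≤ liminf a`.
-/

section Limits

lemma exists_tendsto_of_eventually_eventually_le_add {ι : Type*} {l : Filter ι} [l.NeBot]
    {a : ι → ℝ} (hbdd : IsBoundedUnder (· ≥ ·) l a)
    (h : ∀ ε > 0, ∀ᶠ t in l, ∀ᶠ S in l, a S ≤ a t + ε) :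
    ∃ L, Tendsto a l (𝓝 L) := by
  obtain ⟨t₀, ht₀⟩ := (h 1 one_pos).exists
  have hbdd' : IsBoundedUnder (· ≤ ·) l a := isBoundedUnder_of_eventually_le ht₀
  have hlimsup : limsup a l ≤ liminf a l := by
    refine le_of_forall_pos_le_add fun ε hε => sub_le_iff_le_add.1 ?_
    refine le_liminf_of_le hbdd'.isCoboundedUnder_ge ((h ε hε).mono fun t ht => ?_)
    exact sub_le_iff_le_add.2 (limsup_le_of_le hbdd.isCoboundedUnder_le ht)
  exact ⟨_, tendsto_of_le_liminf_of_limsup_le le_rfl hlimsup hbdd' hbdd⟩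

lemma tendsto_floor_div_mul_div_atTop {T : ℝ} (hT : 0 ≤ T) (t : ℝ) :
    Tendsto (fun S : ℝ => ⌊S / T⌋₊ * t / S) atTop (𝓝 (t / T)) := by
  have h := (tendsto_nat_floor_mul_div_atTop (inv_nonneg.2 hT)).mul_const t
  rw [inv_mul_eq_div] at h
  refine h.congr fun S => ?_
  rw [inv_mul_eq_div, div_mul_eq_mul_div]

lemma tendsto_div_natCeil_atTop : Tendsto (fun t : ℝ => t / ⌈t⌉₊) atTop (𝓝 1) := by
  simpa only [inv_div, inv_one] using (tendsto_nat_ceil_div_atTop (R := ℝ)).inv₀ one_ne_zero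

/- The hypothesis says that a cube of side `S` is filled by `k ^ n` cubes of side `t`, placed on a
grid of integer mesh `T`, up to a remainder on which the density is at most `C`. -/
lemma exists_tendsto_of_le_tiling {a : ℝ → ℝ} {C : ℝ} {n : ℕ} (hnonneg : ∀ t > 0, 0 ≤ a t)
    (htiling : ∀ (t S : ℝ) (k T : ℕ), 0 < t → 0 < S → t ≤ T → (k * T : ℝ) ≤ S →
      a S ≤ (k * t / S) ^ n * a t + C * (1 - (k * t / S) ^ n)) :
    ∃ L, Tendsto a atTop (𝓝 L) := by
  have hbdd : IsBoundedUnder (· ≥ ·) atTop a :=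
    isBoundedUnder_of_eventually_ge ((eventually_gt_atTop 0).mono hnonneg)
  refine exists_tendsto_of_eventually_eventually_le_add hbdd fun ε hε => ?_
  have hremainder : Tendsto (fun t : ℝ => C * (1 - (t / ⌈t⌉₊) ^ n)) atTop (𝓝 0) := by
    simpa using ((tendsto_div_natCeil_atTop.pow n).const_sub 1).const_mul C
  filter_upwards [hremainder.eventually_lt_const hε, eventually_gt_atTop 0] with t htε ht
  have hfilled : (t / ⌈t⌉₊) ^ n * a t ≤ a t :=
    mul_le_of_le_one_left (hnonneg t ht)
      (pow_le_one₀ (by positivity) (div_le_one_of_le₀ (Nat.le_ceil t) (by positivity)))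
  have hratio := (tendsto_floor_div_mul_div_atTop (Nat.cast_nonneg ⌈t⌉₊) t).pow n
  have hlim := (hratio.mul_const (a t)).add ((hratio.const_sub 1).const_mul C)
  filter_upwards [hlim.eventually_lt_const (add_lt_add_of_le_of_lt hfilled htε),
    eventually_gt_atTop 0] with S hS hSpos
  refine (htiling t S ⌊S / ⌈t⌉₊⌋₊ ⌈t⌉₊ ht hSpos (Nat.le_ceil t) ?_).trans hS.le
  have hTpos : (0 : ℝ) < ⌈t⌉₊ := by exact_mod_cast Nat.ceil_pos.2 ht
  exact (le_div_iff₀ hTpos).1 (Nat.floor_le (by positivity))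

end Limits

section MeasureTheory

lemma aemeasurable_comp_of_ae_continuous {X E Y : Type*} [MeasurableSpace X]
    [TopologicalSpace E] [TopologicalSpace.MetrizableSpace E] [SecondCountableTopology E]
    [MeasurableSpace E] [OpensMeasurableSpace E] [MeasurableSpace Y] [TopologicalSpace Y]
    [TopologicalSpace.PseudoMetrizableSpace Y] [BorelSpace Y] [Zero Y]
    {μ : Measure X} {u : X → E → Y} (hu : ∀ ξ, Measurable fun x => u x ξ)
    (hcont : ∀ᵐ x ∂μ, Continuous (u x)) {F : X → E} (hF : Measurable F) :
    AEMeasurable (fun x => u x (F x)) μ := by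
  obtain ⟨G, hGsub, hGmeas, hGnull⟩ := exists_measurable_superset_of_null (ae_iff.1 hcont)
  have hcont' : ∀ x, Continuous fun ξ => Gᶜ.indicator (fun y => u y ξ) x := by
    intro x
    by_cases hx : x ∈ Gᶜ
    · simpa only [indicator_of_mem hx] using not_not.1 fun h => hx (hGsub h)
    · simpa only [indicator_of_notMem hx] using continuous_const
  have hmeas := measurable_uncurry_of_continuous_of_measurable hcont'
    fun ξ => (hu ξ).indicator hGmeas.compl
  refine ⟨_, hmeas.comp (hF.prodMk measurable_id), ?_⟩
  filter_upwards [compl_mem_ae_iff.2 hGnull] with x hx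
  exact (indicator_of_mem hx fun y => u y (F x)).symm

lemma setIntegral_le_sum_add_of_disjoint {X ι : Type*} [MeasurableSpace X] [Fintype ι]
    {μ : Measure X} {F : X → ℝ} {C : ℝ} {Q : Set X} {A : ι → Set X}
    (hQ : MeasurableSet Q) (hμQ : μ Q ≠ ∞) (hF : IntegrableOn F Q μ)
    (hA : ∀ i, MeasurableSet (A i)) (hdisj : Pairwise (Function.onFun Disjoint A))
    (hAQ : ∀ i, A i ⊆ Q) (hC : ∀ᵐ x ∂μ, (∀ i, x ∉ A i) → F x ≤ C) :
    ∫ x in Q, F x ∂μ ≤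
      ∑ i, ∫ x in A i, F x ∂μ + C * (μ.real Q - ∑ i, μ.real (A i)) := by
  have hU : MeasurableSet (⋃ i, A i) := .iUnion hA
  have hUQ : ⋃ i, A i ⊆ Q := iUnion_subset hAQ
  have hrest : ∫ x in Q \ ⋃ i, A i, F x ∂μ ≤ C * (μ.real Q - μ.real (⋃ i, A i)) := by
    calc ∫ x in Q \ ⋃ i, A i, F x ∂μ ≤ ∫ _ in Q \ ⋃ i, A i, C ∂μ := by
          refine setIntegral_mono_on_ae (hF.mono_set sdiff_subset)
            (integrableOn_const (measure_ne_top_of_subset sdiff_subset hμQ)) (hQ.diff hU) ?_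
          filter_upwards [hC] with x hx hxU
          exact hx fun i hi => hxU.2 (mem_iUnion_of_mem i hi)
      _ = C * (μ.real Q - μ.real (⋃ i, A i)) := by
          rw [setIntegral_const, measureReal_sdiff hUQ hU hμQ, smul_eq_mul, mul_comm]
  rw [setIntegral_sdiff hU hF hUQ, integral_iUnion_fintype hA hdisj fun i => hF.mono_set (hAQ i),
    measureReal_iUnion_fintype hdisj hA fun i => measure_ne_top_of_subset (hAQ i) hμQ] at hrest
  linarith

end MeasureTheory

section Cube

lemma isOpen_posCube (N : ℕ) (t : ℝ) : IsOpen (posCube N t) := by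
  simp only [posCube, ofPred_forall]
  exact isOpen_iInter_of_finite fun i => isOpen_Ioo.preimage (by fun_prop)

lemma convex_posCube (N : ℕ) (t : ℝ) : Convex ℝ (posCube N t) :=
  fun _ hx _ hy _ _ ha hb hab i => convex_Ioo 0 t (hx i) (hy i) ha hb hab

lemma volume_posCube (N : ℕ) (t : ℝ) : volume (posCube N t) = ENNReal.ofReal t ^ N := by
  have hpre : posCube N t =
      (WithLp.ofLp : EN N → Fin N → ℝ) ⁻¹' univ.pi fun _ => Ioo 0 t := by
    ext x
    simp [posCube]
  rw [hpre, (PiLp.volume_preserving_ofLp (Fin N)).measure_preimage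
    (MeasurableSet.univ_pi fun _ => measurableSet_Ioo).nullMeasurableSet]
  simp [Real.volume_pi_Ioo]

lemma volume_posCube_ne_top (N : ℕ) (t : ℝ) : volume (posCube N t) ≠ ∞ := by
  rw [volume_posCube]
  exact ENNReal.pow_ne_top ENNReal.ofReal_ne_top

lemma volume_real_posCube (N : ℕ) {t : ℝ} (ht : 0 ≤ t) : volume.real (posCube N t) = t ^ N := by
  simp [measureReal_def, volume_posCube, ENNReal.toReal_ofReal ht]

end Cube

section Tiling

variable {N k T : ℕ} {t S : ℝ}

/-- The vertex with multi-index `i` of the grid of mesh `T` in `ℝ^N`. The mesh is an integer, so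
that the vertices are periods of every function that is `1`-periodic in each coordinate. -/
def gridPoint (T : ℕ) (i : Fin N → Fin k) : EN N :=
  WithLp.toLp 2 fun j => (T * i j : ℝ)

/-- The open cube of side `t` whose lower corner is the grid vertex `gridPoint T i`. -/
def tile (T : ℕ) (t : ℝ) (i : Fin N → Fin k) : Set (EN N) :=
  (· - gridPoint T i) ⁻¹' posCube N t

lemma mem_tile {i : Fin N → Fin k} {x : EN N} :
    x ∈ tile T t i ↔ ∀ j, x j ∈ Ioo (T * i j : ℝ) (T * i j + t) := by
  simp [tile, posCube, gridPoint, sub_lt_iff_lt_add']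

lemma isOpen_tile (i : Fin N → Fin k) : IsOpen (tile T t i) :=
  (isOpen_posCube N t).preimage (by fun_prop)

lemma convex_tile (i : Fin N → Fin k) : Convex ℝ (tile T t i) := by
  simpa only [tile, sub_eq_neg_add] using
    (convex_posCube N t).translate_preimage_right (-gridPoint T i)

lemma volume_real_tile (ht : 0 ≤ t) (i : Fin N → Fin k) : volume.real (tile T t i) = t ^ N := by
  rw [← volume_real_posCube N ht, measureReal_def, measureReal_def, tile,
    (measurePreserving_sub_right volume _).measure_preimage
      (isOpen_posCube N t).measurableSet.nullMeasurableSet]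

lemma tile_subset_posCube (htT : t ≤ T) (hS : (k * T : ℝ) ≤ S) (i : Fin N → Fin k) :
    tile T t i ⊆ posCube N S := by
  intro x hx j
  obtain ⟨hlow, hupp⟩ := mem_tile.1 hx j
  have hnext : (i j + 1 : ℝ) * T ≤ k * T := by
    gcongr
    exact_mod_cast (i j).2
  exact ⟨lt_of_le_of_lt (by positivity) hlow, by linarith⟩

lemma pairwise_disjoint_tile (htT : t ≤ T) :
    Pairwise (Function.onFun Disjoint (tile T t : (Fin N → Fin k) → Set (EN N))) := by
  have hle : ∀ {i j : Fin N → Fin k} {x : EN N}, x ∈ tile T t i → x ∈ tile T t j →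
      ∀ l, i l ≤ j l := by
    intro i j x hi hj l
    by_contra! hlt
    have hnext : (T : ℝ) * (j l + 1) ≤ T * i l := by
      gcongr
      exact_mod_cast hlt
    linarith [(mem_tile.1 hi l).1, (mem_tile.1 hj l).2]
  refine fun i j hij => disjoint_left.2 fun x hi hj => hij (funext fun l => ?_)
  exact le_antisymm (hle hi hj l) (hle hj hi l)

lemma ae_notMem_closure_tile :
    ∀ᵐ x, (∀ i : Fin N → Fin k, x ∉ tile T t i) →
      ∀ i : Fin N → Fin k, x ∉ closure (tile T t i) := by
  have hfrontier : ∀ᵐ x, ∀ i : Fin N → Fin k, x ∉ frontier (tile T t i) :=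
    ae_all_iff.2 fun i => measure_eq_zero_iff_ae_notMem.1 ((convex_tile i).addHaar_frontier volume)
  filter_upwards [hfrontier] with x hx hxt i hcl
  exact hx i ⟨hcl, by rw [(isOpen_tile i).interior_eq]; exact hxt i⟩

lemma periodic_gridPoint {α : Type*} {h : EN N → α}
    (hper : ∀ j, Function.Periodic h (EuclideanSpace.single j 1)) (T : ℕ) (i : Fin N → Fin k) :
    Function.Periodic h (gridPoint T i) := by
  have hsum : gridPoint T i = ∑ j, (T * i j : ℕ) • EuclideanSpace.single j (1 : ℝ) := by
    ext l
    simp [gridPoint, Pi.single_apply]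
  rw [hsum]
  exact Finset.sum_induction _ (Function.Periodic h) (fun _ _ => .add_period) (fun _ => by simp)
    fun j _ => (hper j).nsmul _

end Tiling

section Integrand

variable {N d : ℕ}

/-- Nonnegative Carathéodory integrands that are bounded on bounded sets of matrices, uniformly in
the space variable. This class contains the standing integrands `f` and is stable under
`penalized`, so that `f` and `g(·,s,·)` are treated alike. -/
structure IsCaratheodoryIntegrand (h : EN N → Mat d N → ℝ) : Prop where
  measurable : ∀ ξ, Measurable fun y => h y ξ
  nonneg : ∀ y ξ, 0 ≤ h y ξ
  ae_continuous : ∀ᵐ y, Continuous (h y)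
  bounded : ∀ R : ℝ, ∃ C : ℝ, ∀ᵐ y, ∀ ξ, ‖ξ‖ ≤ R → h y ξ ≤ C

lemma StdIntegrand.isCaratheodoryIntegrand {f : EN N → Mat d N → ℝ} {α β L : ℝ}
    (hf : StdIntegrand N d f α β L) : IsCaratheodoryIntegrand f where
  measurable := hf.meas
  nonneg := hf.nonneg
  ae_continuous := by
    filter_upwards [hf.lip] with y hy
    exact (LipschitzWith.of_dist_le' fun ξ η => by
      rw [Real.dist_eq, dist_eq_norm]; exact hy ξ η).continuous
  bounded R := by
    have hβ : 0 ≤ β := hf.alpha_pos.le.trans hf.alpha_le_beta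
    refine ⟨β * (1 + R), hf.growth.mono fun y hy ξ hξ => (hy ξ).2.trans ?_⟩
    gcongr

lemma IsCaratheodoryIntegrand.integrableOn {h : EN N → Mat d N → ℝ}
    (hh : IsCaratheodoryIntegrand h) {F : EN N → Mat d N} (hF : Measurable F) {R : ℝ}
    (hFR : ∀ x, ‖F x‖ ≤ R) {s : Set (EN N)} (hs : volume s ≠ ∞) :
    IntegrableOn (fun x => h x (F x)) s := by
  obtain ⟨C, hC⟩ := hh.bounded R
  refine Measure.integrableOn_of_bounded (M := C) hs
    (aemeasurable_comp_of_ae_continuous hh.measurable hh.ae_continuous hF).aestronglyMeasurable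
    (ae_restrict_of_ae (hC.mono fun x hx => ?_))
  rw [Real.norm_of_nonneg (hh.nonneg _ _)]
  exact hx _ (hFR x)

lemma IsCaratheodoryIntegrand.integrableOn_add_fderiv {h : EN N → Mat d N → ℝ}
    (hh : IsCaratheodoryIntegrand h) {φ : EN N → EN d} {K : ℝ≥0} (hφ : LipschitzWith K φ)
    (ξ : Mat d N) {s : Set (EN N)} (hs : volume s ≠ ∞) :
    IntegrableOn (fun x => h x (ξ + fderiv ℝ φ x)) s :=
  hh.integrableOn ((measurable_fderiv ℝ φ).const_add ξ)
    (fun _ => norm_add_le_of_le le_rfl (norm_fderiv_le_of_lipschitz ℝ hφ)) hs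

end Integrand

section CellProblem

variable {N d : ℕ} {t : ℝ} {φ ψ : EN N → EN d}

/-- The space `W^{1,∞}_0((0,t)^N; ℝ^d)`, represented by the Lipschitz maps on `ℝ^N` that vanish
off the cube. -/
def IsTestField (t : ℝ) (φ : EN N → EN d) : Prop :=
  (∃ K, LipschitzWith K φ) ∧ ∀ x ∉ posCube N t, φ x = 0

/-- The energy of a test field in the cell problem on `(0,t)^N`, averaged over the cube. -/
noncomputable def cellEnergy (h : EN N → Mat d N → ℝ) (ξ : Mat d N) (t : ℝ) (φ : EN N → EN d) : ℝ :=
  (t ^ N)⁻¹ * ∫ x in posCube N t, h x (ξ + fderiv ℝ φ x)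

lemma isTestField_zero (t : ℝ) : IsTestField t (0 : EN N → EN d) :=
  ⟨⟨0, LipschitzWith.const 0⟩, fun _ _ => rfl⟩

lemma IsTestField.add (hφ : IsTestField t φ) (hψ : IsTestField t ψ) : IsTestField t (φ + ψ) := by
  obtain ⟨⟨K, hK⟩, hφ₀⟩ := hφ
  obtain ⟨⟨K', hK'⟩, hψ₀⟩ := hψ
  exact ⟨⟨K + K', hK.add hK'⟩, fun x hx => by simp [hφ₀ x hx, hψ₀ x hx]⟩

lemma IsTestField.clm_comp {m : ℕ} (hφ : IsTestField t φ) (P : EN d →L[ℝ] EN m) :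
    IsTestField t (P ∘ φ) := by
  obtain ⟨⟨K, hK⟩, hφ₀⟩ := hφ
  exact ⟨⟨_, P.lipschitz.comp hK⟩, fun x hx => by simp [hφ₀ x hx]⟩

lemma freeCell_eq_sInf (h : EN N → Mat d N → ℝ) (ξ : Mat d N) (t : ℝ) :
    freeCell h ξ t = sInf (cellEnergy h ξ t '' {φ | IsTestField t φ}) := by
  refine congrArg sInf (Set.ext fun c => ⟨?_, ?_⟩)
  · rintro ⟨φ, K, hφ, hφ₀, rfl⟩
    exact ⟨φ, ⟨⟨K, hφ⟩, hφ₀⟩, rfl⟩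
  · rintro ⟨φ, ⟨⟨K, hφ⟩, hφ₀⟩, rfl⟩
    exact ⟨φ, K, hφ, hφ₀, rfl⟩

lemma tanCell_eq_sInf (f : EN N → Mat d N → ℝ) (M : Set (EN d)) (s : EN d) (ξ : Mat d N) (t : ℝ) :
    tanCell f M s ξ t =
      sInf (cellEnergy f ξ t '' {φ | IsTestField t φ ∧ ∀ x, φ x ∈ TangentSet M s}) := by
  refine congrArg sInf (Set.ext fun c => ⟨?_, ?_⟩)
  · rintro ⟨φ, K, hφ, hφt, hφ₀, rfl⟩
    exact ⟨φ, ⟨⟨⟨K, hφ⟩, hφ₀⟩, hφt⟩, rfl⟩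
  · rintro ⟨φ, ⟨⟨⟨K, hφ⟩, hφ₀⟩, hφt⟩, rfl⟩
    exact ⟨φ, K, hφ, hφt, hφ₀, rfl⟩

lemma cellEnergy_nonneg {h : EN N → Mat d N → ℝ} (hh : ∀ y ξ, 0 ≤ h y ξ) (ξ : Mat d N)
    (ht : 0 ≤ t) (φ : EN N → EN d) : 0 ≤ cellEnergy h ξ t φ :=
  mul_nonneg (by positivity) (integral_nonneg fun _ => hh _ _)

lemma bddBelow_cellEnergy_image {h : EN N → Mat d N → ℝ} (hh : ∀ y ξ, 0 ≤ h y ξ) (ξ : Mat d N)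
    (ht : 0 ≤ t) (s : Set (EN N → EN d)) : BddBelow (cellEnergy h ξ t '' s) :=
  ⟨0, forall_mem_image.2 fun φ _ => cellEnergy_nonneg hh ξ ht φ⟩

lemma freeCell_nonneg {h : EN N → Mat d N → ℝ} (hh : ∀ y ξ, 0 ≤ h y ξ) (ξ : Mat d N)
    (ht : 0 ≤ t) : 0 ≤ freeCell h ξ t := by
  rw [freeCell_eq_sInf]
  exact Real.sInf_nonneg (forall_mem_image.2 fun φ _ => cellEnergy_nonneg hh ξ ht φ)

lemma freeCell_le_cellEnergy {h : EN N → Mat d N → ℝ} (hh : ∀ y ξ, 0 ≤ h y ξ) (ξ : Mat d N)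
    (ht : 0 ≤ t) (hφ : IsTestField t φ) : freeCell h ξ t ≤ cellEnergy h ξ t φ := by
  rw [freeCell_eq_sInf]
  exact csInf_le (bddBelow_cellEnergy_image hh ξ ht _) (mem_image_of_mem _ hφ)

end CellProblem

section Homogenization

variable {N d k T : ℕ} {t S C : ℝ} {h : EN N → Mat d N → ℝ} {ξ : Mat d N} {φ : EN N → EN d}

/-- The field obtained by repeating `φ` on `k ^ N` tiles of the grid of mesh `T`. -/
def tiling (φ : EN N → EN d) (T k : ℕ) : EN N → EN d :=
  ∑ i : Fin N → Fin k, fun x => φ (x - gridPoint T i)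

lemma IsTestField.tiling (hφ : IsTestField t φ) (htT : t ≤ T) (hS : (k * T : ℝ) ≤ S) :
    IsTestField S (tiling φ T k) := by
  obtain ⟨⟨K, hK⟩, hφ₀⟩ := hφ
  refine Finset.sum_induction _ (IsTestField S) (fun _ _ => .add) (isTestField_zero S)
    fun i _ => ⟨⟨K, ?_⟩, fun x hx => hφ₀ _ fun hxi => hx (tile_subset_posCube htT hS i hxi)⟩
  exact LipschitzWith.of_dist_le_mul fun x y => by
    simpa only [dist_sub_right] using hK.dist_le_mul (x - gridPoint T i) (y - gridPoint T i)

lemma fderiv_tiling_of_mem_tile (hφ : ∀ x ∉ posCube N t, φ x = 0) (htT : t ≤ T)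
    {i : Fin N → Fin k} {x : EN N} (hx : x ∈ tile T t i) :
    fderiv ℝ (tiling φ T k) x = fderiv ℝ φ (x - gridPoint T i) := by
  have heq : tiling φ T k =ᶠ[𝓝 x] fun y => φ (y - gridPoint T i) := by
    filter_upwards [(isOpen_tile i).mem_nhds hx] with y hy
    rw [tiling, Finset.sum_apply]
    refine Finset.sum_eq_single_of_mem i (Finset.mem_univ i) fun j _ hji => hφ _ fun hyj => ?_
    exact disjoint_left.1 (pairwise_disjoint_tile htT hji) hyj hy
  rw [heq.fderiv_eq, fderiv_comp_sub]

lemma fderiv_tiling_of_notMem_closure_tile (hφ : ∀ x ∉ posCube N t, φ x = 0) {x : EN N}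
    (hx : ∀ i : Fin N → Fin k, x ∉ closure (tile T t i)) :
    fderiv ℝ (tiling φ T k) x = 0 := by
  have hsupp : Function.support (tiling φ T k) ⊆ ⋃ i : Fin N → Fin k, tile T t i := by
    intro y hy
    by_contra hyt
    refine hy ?_
    rw [tiling, Finset.sum_apply]
    exact Finset.sum_eq_zero fun i _ => hφ _ fun hyi => hyt (mem_iUnion_of_mem i hyi)
  refine fderiv_of_notMem_tsupport (𝕜 := ℝ) fun hmem => ?_
  have hcl := closure_mono hsupp hmem
  rw [closure_iUnion_of_finite] at hcl
  obtain ⟨i, hi⟩ := mem_iUnion.1 hcl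
  exact hx i hi

lemma setIntegral_tile_tiling
    (hper : ∀ j, Function.Periodic h (EuclideanSpace.single j 1))
    (hφ : ∀ x ∉ posCube N t, φ x = 0) (htT : t ≤ T) (i : Fin N → Fin k) :
    ∫ x in tile T t i, h x (ξ + fderiv ℝ (tiling φ T k) x) =
      ∫ x in posCube N t, h x (ξ + fderiv ℝ φ x) := by
  rw [← (measurePreserving_sub_right volume (gridPoint T i)).setIntegral_preimage_emb
    (measurableEmbedding_subRight _) (fun x => h x (ξ + fderiv ℝ φ x))]
  refine setIntegral_congr_fun (isOpen_tile i).measurableSet fun x hx => ?_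
  simp only [fderiv_tiling_of_mem_tile hφ htT hx, (periodic_gridPoint hper T i).sub_eq x]

lemma IsCaratheodoryIntegrand.setIntegral_tiling_le (hh : IsCaratheodoryIntegrand h)
    (hper : ∀ j, Function.Periodic h (EuclideanSpace.single j 1)) (hC : ∀ᵐ y, h y ξ ≤ C)
    (hφ : IsTestField t φ) (ht : 0 ≤ t) (hS₀ : 0 ≤ S) (htT : t ≤ T) (hS : (k * T : ℝ) ≤ S) :
    ∫ x in posCube N S, h x (ξ + fderiv ℝ (tiling φ T k) x) ≤
      k ^ N * (∫ x in posCube N t, h x (ξ + fderiv ℝ φ x)) + C * (S ^ N - (k * t) ^ N) := by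
  obtain ⟨K, hK⟩ := (hφ.tiling htT hS).1
  have hgap : ∀ᵐ x, (∀ i : Fin N → Fin k, x ∉ tile T t i) →
      h x (ξ + fderiv ℝ (tiling φ T k) x) ≤ C := by
    filter_upwards [ae_notMem_closure_tile, hC] with x hcl hx hxt
    rwa [fderiv_tiling_of_notMem_closure_tile hφ.2 (hcl hxt), add_zero]
  have hle := setIntegral_le_sum_add_of_disjoint (isOpen_posCube N S).measurableSet
    (volume_posCube_ne_top N S) (hh.integrableOn_add_fderiv hK ξ (volume_posCube_ne_top N S))
    (fun i => (isOpen_tile i).measurableSet) (pairwise_disjoint_tile htT)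
    (tile_subset_posCube htT hS) hgap
  simpa [setIntegral_tile_tiling hper hφ.2 htT, volume_real_tile ht, volume_real_posCube N hS₀,
    mul_pow] using hle

lemma IsCaratheodoryIntegrand.freeCell_le_tiling (hh : IsCaratheodoryIntegrand h)
    (hper : ∀ j, Function.Periodic h (EuclideanSpace.single j 1)) (hC : ∀ᵐ y, h y ξ ≤ C)
    (ht : 0 < t) (hS₀ : 0 < S) (htT : t ≤ T) (hS : (k * T : ℝ) ≤ S) :
    freeCell h ξ S ≤ (k * t / S) ^ N * freeCell h ξ t + C * (1 - (k * t / S) ^ N) := by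
  have henergy : ∀ φ, IsTestField t φ →
      freeCell h ξ S ≤ (k * t / S) ^ N * cellEnergy h ξ t φ + C * (1 - (k * t / S) ^ N) := by
    intro φ hφ
    calc freeCell h ξ S ≤ cellEnergy h ξ S (tiling φ T k) :=
          freeCell_le_cellEnergy hh.nonneg ξ hS₀.le (hφ.tiling htT hS)
      _ ≤ (S ^ N)⁻¹ * (k ^ N * (∫ x in posCube N t, h x (ξ + fderiv ℝ φ x)) +
            C * (S ^ N - (k * t) ^ N)) := by
          rw [cellEnergy]
          gcongr
          exact hh.setIntegral_tiling_le hper hC hφ ht.le hS₀.le htT hS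
      _ = (k * t / S) ^ N * cellEnergy h ξ t φ + C * (1 - (k * t / S) ^ N) := by
          rw [cellEnergy, div_pow, mul_pow]
          field_simp
  rw [← sub_le_iff_le_add, freeCell_eq_sInf h ξ t,
    ← smul_eq_mul ((k * t / S) ^ N),
    ← Real.sInf_smul_of_nonneg (by positivity)]
  refine le_csInf (Nonempty.smul_set ⟨_, mem_image_of_mem _ (isTestField_zero t)⟩) ?_
  rintro _ ⟨_, ⟨φ, hφ, rfl⟩, rfl⟩
  exact sub_le_iff_le_add.2 (henergy φ hφ)

lemma IsCaratheodoryIntegrand.exists_tendsto_freeCell (hh : IsCaratheodoryIntegrand h)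
    (hper : ∀ j, Function.Periodic h (EuclideanSpace.single j 1)) (ξ : Mat d N) :
    ∃ L, Tendsto (freeCell h ξ) atTop (𝓝 L) := by
  obtain ⟨C, hC⟩ := hh.bounded ‖ξ‖
  exact exists_tendsto_of_le_tiling (fun t ht => freeCell_nonneg hh.nonneg ξ ht.le)
    fun t S k T ht hS₀ htT hS =>
      hh.freeCell_le_tiling hper (hC.mono fun y hy => hy ξ le_rfl) ht hS₀ htT hS

end Homogenization

section Projection

variable {N d : ℕ} {M : Set (EN d)} {s : EN d} {P : EN d →L[ℝ] EN d}
  {f : EN N → Mat d N → ℝ} {ξ : Mat d N} {φ : EN N → EN d} {t : ℝ}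

/-- The integrand `f(y, Pη) + |η - Pη|`, which evaluates `f` on the range of `P` and penalizes the
remaining part of the matrix. For `s ∈ M` and `P` the projection onto `T_s M` it is `g(·,s,·)`. -/
noncomputable def penalized (f : EN N → Mat d N → ℝ) (P : EN d →L[ℝ] EN d) : EN N → Mat d N → ℝ :=
  fun y η => f y (P ∘L η) + ‖η - P ∘L η‖

lemma IsCaratheodoryIntegrand.penalized (hf : IsCaratheodoryIntegrand f) (P : EN d →L[ℝ] EN d) :
    IsCaratheodoryIntegrand (penalized f P) where
  measurable η := (hf.measurable _).add_const _
  nonneg y η := add_nonneg (hf.nonneg _ _) (norm_nonneg _)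
  ae_continuous := by
    filter_upwards [hf.ae_continuous] with y hy
    have hcomp : Continuous fun η : Mat d N => P ∘L η := continuous_const.clm_comp continuous_id
    exact (hy.comp hcomp).add (continuous_id.sub hcomp).norm
  bounded R := by
    obtain ⟨C, hC⟩ := hf.bounded (‖P‖ * R)
    refine ⟨C + (R + ‖P‖ * R), hC.mono fun y hy η hη => ?_⟩
    have hP : ‖P ∘L η‖ ≤ ‖P‖ * R := (P.opNorm_comp_le η).trans (by gcongr)
    exact add_le_add (hy _ hP) (norm_sub_le_of_le hη hP)

lemma periodic_penalized {c : EN N} (hf : Function.Periodic f c) (P : EN d →L[ℝ] EN d) :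
    Function.Periodic (penalized f P) c := fun y => by
  funext η
  simp only [penalized, hf y]

lemma gOf_eq_penalized (D : ProjData M) (f : EN N → Mat d N → ℝ) (hs : s ∈ M) :
    (fun y => gOf D f y s) = penalized f (D.tanProj s) := by
  have hdist : Metric.infDist s M = 0 := Metric.infDist_zero_of_mem hs
  have hpr : D.pr s = s := by
    have hnear := D.pr_nearest s (hdist.trans_lt D.δ₀_pos)
    rw [hdist, norm_eq_zero, sub_eq_zero] at hnear
    exact hnear.symm
  have hchi : D.chi s = 1 := D.chi_one s (hdist.trans_le (half_pos D.δ₀_pos).le)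
  funext y η
  simp only [gOf, tanP, penalized, hpr, hchi, one_smul]

lemma TangentCols.comp_eq_self (hξ : TangentCols M s ξ) (hP : ∀ v ∈ TangentSet M s, P v = v) :
    P ∘L ξ = ξ := by
  refine ContinuousLinearMap.coe_injective ?_
  refine (EuclideanSpace.basisFun (Fin N) ℝ).toBasis.ext fun i => ?_
  simpa using hP _ (hξ i)

lemma cellEnergy_penalized_eq (f : EN N → Mat d N → ℝ) (hξ : P ∘L ξ = ξ)
    (hφ : ∀ x, P (φ x) = φ x) (t : ℝ) :
    cellEnergy (penalized f P) ξ t φ = cellEnergy f ξ t φ := by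
  have hgrad : ∀ x, P ∘L fderiv ℝ φ x = fderiv ℝ φ x := by
    intro x
    by_cases hx : DifferentiableAt ℝ φ x
    · have hcomp := (P.hasFDerivAt.comp x hx.hasFDerivAt).fderiv
      rwa [show P ∘ φ = φ from funext hφ, eq_comm] at hcomp
    · rw [fderiv_zero_of_not_differentiableAt hx, ContinuousLinearMap.comp_zero]
  simp only [cellEnergy, penalized, ContinuousLinearMap.comp_add, hξ, hgrad, sub_self, norm_zero,
    add_zero]

lemma cellEnergy_comp_le_penalized (hf : IsCaratheodoryIntegrand f) (hξ : P ∘L ξ = ξ)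
    (hφ : IsTestField t φ) (ht : 0 ≤ t) :
    cellEnergy f ξ t (P ∘ φ) ≤ cellEnergy (penalized f P) ξ t φ := by
  obtain ⟨K, hK⟩ := hφ.1
  obtain ⟨K', hK'⟩ := (hφ.clm_comp P).1
  have hQ := volume_posCube_ne_top N t
  refine mul_le_mul_of_nonneg_left (setIntegral_mono_ae (hf.integrableOn_add_fderiv hK' ξ hQ)
    ((hf.penalized P).integrableOn_add_fderiv hK ξ hQ) ?_) (by positivity)
  filter_upwards [hK.ae_differentiableAt] with x hx
  have hgrad : fderiv ℝ (P ∘ φ) x = P ∘L fderiv ℝ φ x :=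
    (P.hasFDerivAt.comp x hx.hasFDerivAt).fderiv
  simp only [penalized, ContinuousLinearMap.comp_add, hξ, hgrad]
  exact le_add_of_nonneg_right (norm_nonneg _)

lemma tanCell_eq_freeCell_penalized (hPmem : ∀ v, P v ∈ TangentSet M s)
    (hPid : ∀ v ∈ TangentSet M s, P v = v) (hf : IsCaratheodoryIntegrand f)
    (hξ : TangentCols M s ξ) (ht : 0 ≤ t) :
    tanCell f M s ξ t = freeCell (penalized f P) ξ t := by
  have hPξ : P ∘L ξ = ξ := hξ.comp_eq_self hPid
  have hproj : ∀ φ : EN N → EN d, IsTestField t φ →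
      P ∘ φ ∈ {φ : EN N → EN d | IsTestField t φ ∧ ∀ x, φ x ∈ TangentSet M s} :=
    fun φ hφ => ⟨hφ.clm_comp P, fun x => hPmem (φ x)⟩
  rw [tanCell_eq_sInf]
  apply le_antisymm
  · rw [freeCell_eq_sInf]
    refine le_csInf ⟨_, mem_image_of_mem _ (isTestField_zero t)⟩ (forall_mem_image.2 fun φ hφ => ?_)
    exact (csInf_le (bddBelow_cellEnergy_image hf.nonneg ξ ht _)
      (mem_image_of_mem _ (hproj φ hφ))).trans (cellEnergy_comp_le_penalized hf hPξ hφ ht)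
  · refine le_csInf ⟨_, mem_image_of_mem _ (hproj 0 (isTestField_zero t))⟩
      (forall_mem_image.2 fun φ hφ => ?_)
    rw [← cellEnergy_penalized_eq f hPξ (fun x => hPid _ (hφ.2 x)) t]
    exact freeCell_le_cellEnergy (hf.penalized P).nonneg ξ ht hφ.1

end Projection

theorem statement_5_general {N d : ℕ} {M : Set (EN d)} {s : EN d} {P : EN d →L[ℝ] EN d}
    (hPmem : ∀ v, P v ∈ TangentSet M s) (hPid : ∀ v ∈ TangentSet M s, P v = v)
    {f : EN N → Mat d N → ℝ} (hf : IsCaratheodoryIntegrand f)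
    (hper : ∀ i, Function.Periodic f (EuclideanSpace.single i 1))
    {ξ : Mat d N} (hξ : TangentCols M s ξ) :
    ∃ L : ℝ, Tendsto (tanCell f M s ξ) atTop (𝓝 L) ∧
      Tendsto (freeCell (penalized f P) ξ) atTop (𝓝 L) := by
  obtain ⟨L, hL⟩ := (hf.penalized P).exists_tendsto_freeCell
    (fun i => periodic_penalized (hper i) P) ξ
  refine ⟨L, hL.congr' ?_, hL⟩
  filter_upwards [eventually_ge_atTop 0] with t ht
  exact (tanCell_eq_freeCell_penalized hPmem hPid hf hξ ht).symm

/-- Identification of the tangentially homogenized density: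
for `s ∈ M` and `ξ ∈ [T_s M]^N`, the constrained homogenization limit
`Tf_hom(s,ξ)` and the unconstrained homogenization limit `g_hom(s,ξ)` of the
modified integrand both exist and coincide. -/
theorem statement_5
    (N d : ℕ) (M : Set (EN d)) (hM : IsNiceManifold d M)
    (f : EN N → Mat d N → ℝ) (α β L : ℝ) (hf : StdIntegrand N d f α β L)
    (D : ProjData M) :
    ∀ s ∈ M, ∀ ξ : Mat d N, TangentCols M s ξ →
      ∃ Lv : ℝ,
        Filter.Tendsto (fun t => tanCell f M s ξ t) Filter.atTop (nhds Lv) ∧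
        Filter.Tendsto (fun t => freeCell (fun y => gOf D f y s) ξ t)
          Filter.atTop (nhds Lv) := by
  intro s hs ξ hξ
  rw [gOf_eq_penalized D f hs]
  exact statement_5_general (D.tanProj_mem s hs) (D.tanProj_id s hs) hf.isCaratheodoryIntegrand
    (fun i y => funext fun η => hf.periodic y η i) hξ
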